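/- For every g ≥ 5, the block-inclusion homomorphism O_{g,g}(ℤ) → O_{g+1,g+1}(ℤ), given by extending a matrix by the identity on one additional hyperbolic plane, induces an isomorphism on abelianisations. -/

import Mathlib

open Matrix

/-- Index type for `2g × 2g` matrices: the first `g` indices correspond to the
basis vectors `e₁, …, e_g` and the last `g` to `f₁, …, f_g`. -/
abbrev HypIdx (g : ℕ) := Fin g ⊕ Fin g

/-- Gram matrix of the orthogonal sum of `g` hyperbolic planes. -/
def Qmat (g : ℕ) : Matrix (HypIdx g) (HypIdx g) ℤ := Matrix.fromBlocks 0 1 1 0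

/-- The standard symplectic form matrix. -/
def Jmat (g : ℕ) : Matrix (HypIdx g) (HypIdx g) ℤ := Matrix.fromBlocks 0 1 (-1) 0

/-- The subgroup of `GL_{2g}(ℤ)` of matrices `A` with `Aᵀ * Q * A = Q`. -/
def formGroup (g : ℕ) (Q : Matrix (HypIdx g) (HypIdx g) ℤ) :
    Subgroup (GL (HypIdx g) ℤ) where
  carrier := {A | A.valᵀ * Q * A.val = Q}
  one_mem' := by simp
  mul_mem' := by
    intro A B hA hB
    have hA' : A.valᵀ * Q * A.val = Q := hA
    have hB' : B.valᵀ * Q * B.val = Q := hB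
    show (A * B).valᵀ * Q * (A * B).val = Q
    rw [Units.val_mul, transpose_mul]
    calc B.valᵀ * A.valᵀ * Q * (A.val * B.val)
        = B.valᵀ * (A.valᵀ * Q * A.val) * B.val := by noncomm_ring
      _ = B.valᵀ * Q * B.val := by rw [hA']
      _ = Q := hB'
  inv_mem' := by
    intro A hA
    have hA' : A.valᵀ * Q * A.val = Q := hA
    show (A⁻¹).valᵀ * Q * (A⁻¹).val = Q
    have h1 : A.val * (A⁻¹).val = 1 := by
      rw [← Units.val_mul, mul_inv_cancel, Units.val_one]
    calc (A⁻¹).valᵀ * Q * (A⁻¹).val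
        = (A⁻¹).valᵀ * (A.valᵀ * Q * A.val) * (A⁻¹).val := by rw [hA']
      _ = (A.val * (A⁻¹).val)ᵀ * Q * (A.val * (A⁻¹).val) := by
          rw [transpose_mul]; noncomm_ring
      _ = Q := by rw [h1]; simp

/-- `O_{g,g}(ℤ)`. -/
def Ogg (g : ℕ) : Subgroup (GL (HypIdx g) ℤ) := formGroup g (Qmat g)

/-- `Sp_{2g}(ℤ)`. -/
def Sp (g : ℕ) : Subgroup (GL (HypIdx g) ℤ) := formGroup g (Jmat g)

/-- The standard quadratic refinement `q(x, y) = Σᵢ xᵢ yᵢ mod 2`. -/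
def qform (g : ℕ) (v : HypIdx g → ℤ) : ZMod 2 :=
  ∑ i : Fin g, ((v (Sum.inl i) * v (Sum.inr i) : ℤ) : ZMod 2)

/-- The subgroup of `GL_{2g}(ℤ)` preserving the quadratic refinement `q`. -/
def qPreserving (g : ℕ) : Subgroup (GL (HypIdx g) ℤ) where
  carrier := {A | ∀ v : HypIdx g → ℤ, qform g (A.val.mulVec v) = qform g v}
  one_mem' := by intro v; simp
  mul_mem' := by
    intro A B hA hB v
    show qform g ((A * B).val.mulVec v) = qform g v
    rw [Units.val_mul, ← Matrix.mulVec_mulVec, hA, hB]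
  inv_mem' := by
    intro A hA v
    have h1 : A.val.mulVec ((A⁻¹).val.mulVec v) = v := by
      rw [Matrix.mulVec_mulVec, ← Units.val_mul, mul_inv_cancel, Units.val_one,
        Matrix.one_mulVec]
    calc qform g ((A⁻¹).val.mulVec v)
        = qform g (A.val.mulVec ((A⁻¹).val.mulVec v)) := (hA _).symm
      _ = qform g v := by rw [h1]

/-- `Sp^q_{2g}(ℤ)`: symplectic matrices preserving the quadratic refinement. -/
def Spq (g : ℕ) : Subgroup (GL (HypIdx g) ℤ) := Sp g ⊓ qPreserving g
/-- Extension of a `2g × 2g` matrix to a `2(g+1) × 2(g+1)` matrix, acting as the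
original matrix on the first `g` hyperbolic/symplectic basis pairs and as the
identity on the additional pair. -/
def extendMat {g : ℕ} (A : Matrix (HypIdx g) (HypIdx g) ℤ) :
    Matrix (HypIdx (g + 1)) (HypIdx (g + 1)) ℤ := fun i j =>
  match i, j with
  | Sum.inl a, Sum.inl b =>
      if h : a.val < g ∧ b.val < g then A (Sum.inl ⟨a.val, h.1⟩) (Sum.inl ⟨b.val, h.2⟩)
      else if a = b then 1 else 0
  | Sum.inl a, Sum.inr b =>
      if h : a.val < g ∧ b.val < g then A (Sum.inl ⟨a.val, h.1⟩) (Sum.inr ⟨b.val, h.2⟩) else 0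
  | Sum.inr a, Sum.inl b =>
      if h : a.val < g ∧ b.val < g then A (Sum.inr ⟨a.val, h.1⟩) (Sum.inl ⟨b.val, h.2⟩) else 0
  | Sum.inr a, Sum.inr b =>
      if h : a.val < g ∧ b.val < g then A (Sum.inr ⟨a.val, h.1⟩) (Sum.inr ⟨b.val, h.2⟩)
      else if a = b then 1 else 0

/-!
The elementary (Eichler) transformations of the hyperbolic lattice are commutators of one another
as soon as there are three hyperbolic planes. The Euclidean algorithm
carries any hyperbolic pair by elementary transformations to the last standard one, so every element
of `O_{n+1,n+1}(ℤ)` is an elementary one times a stabilized one. This gives surjectivity on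
abelianizations. For injectivity, the determinant and the action on the orientation of the maximal
positive definite subspaces of `ℝ^{n,n}` are characters compatible with stabilization. Their common
kernel is trivial for `O_{1,1}(ℤ)`, hence by induction on `n` it consists of elementary
transformations, so for `n ≥ 3` it is the commutator subgroup.
-/

section Abelianization

variable {G H : Type*} [Group G] [Group H]

lemma abelianizationMap_bijective {f : G →* H} (hinj : (commutator H).comap f ≤ commutator G)
    (hsurj : commutator H ⊔ f.range = ⊤) : Function.Bijective (Abelianization.map f) := by
  constructor
  · rw [injective_iff_map_eq_one]
    intro x hx
    obtain ⟨a, rfl⟩ := QuotientGroup.mk_surjective x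
    exact (QuotientGroup.eq_one_iff a).2 (hinj ((QuotientGroup.eq_one_iff (f a)).1 hx))
  · intro y
    obtain ⟨b, rfl⟩ := QuotientGroup.mk_surjective y
    obtain ⟨c, hc, _, ⟨a, rfl⟩, rfl⟩ := Subgroup.mem_sup_of_normal_left.1
      (hsurj ▸ Subgroup.mem_top b)
    refine ⟨Abelianization.of a, ?_⟩
    rw [QuotientGroup.mk_mul, (QuotientGroup.eq_one_iff c).2 hc, one_mul]
    rfl

end Abelianization

section IndefiniteOrthogonal

lemma sign_eq_sign_of_isPreconnected {X : Type*} [TopologicalSpace X] {s : Set X}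
    (hs : IsPreconnected s) {f : X → ℝ} (hf : ContinuousOn f s) (hf0 : ∀ x ∈ s, f x ≠ 0)
    {x y : X} (hx : x ∈ s) (hy : y ∈ s) : SignType.sign (f x) = SignType.sign (f y) :=
  hs.constant (f := fun z ↦ SignType.sign (f z))
    (fun z hz ↦ (continuousAt_sign_of_ne_zero (hf0 z hz)).comp_continuousWithinAt (hf z hz)) hx hy

open LieAlgebra.Orthogonal

variable {p q : Type*} [Fintype p] [Fintype q] [DecidableEq p] [DecidableEq q]

variable (p q) in
/-- The real indefinite orthogonal group `O(p, q)`, encoded as the submonoid of square matrices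
preserving the form `∑ xᵢ² - ∑ yⱼ²`. -/
def indefiniteOrthogonal : Submonoid (Matrix (p ⊕ q) (p ⊕ q) ℝ) where
  carrier := {A | Aᵀ * indefiniteDiagonal p q ℝ * A = indefiniteDiagonal p q ℝ}
  one_mem' := by simp
  mul_mem' {A B} hA hB := by
    calc (A * B)ᵀ * indefiniteDiagonal p q ℝ * (A * B)
        = Bᵀ * (Aᵀ * indefiniteDiagonal p q ℝ * A) * B := by
          simp only [transpose_mul, Matrix.mul_assoc]
      _ = indefiniteDiagonal p q ℝ := by rw [show _ = _ from hA, show _ = _ from hB]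

lemma dotProduct_indefiniteDiagonal_mulVec (v : p ⊕ q → ℝ) :
    v ⬝ᵥ indefiniteDiagonal p q ℝ *ᵥ v =
      (v ∘ Sum.inl) ⬝ᵥ (v ∘ Sum.inl) - (v ∘ Sum.inr) ⬝ᵥ (v ∘ Sum.inr) := by
  simp [indefiniteDiagonal, dotProduct, mulVec_diagonal, sub_eq_add_neg]

lemma dotProduct_blocks_of_mem_indefiniteOrthogonal {A : Matrix (p ⊕ q) (p ⊕ q) ℝ}
    (hA : A ∈ indefiniteOrthogonal p q) (x : p → ℝ) (y : q → ℝ) :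
    (A.toBlocks₁₁ *ᵥ x + A.toBlocks₁₂ *ᵥ y) ⬝ᵥ (A.toBlocks₁₁ *ᵥ x + A.toBlocks₁₂ *ᵥ y) -
      (A.toBlocks₂₁ *ᵥ x + A.toBlocks₂₂ *ᵥ y) ⬝ᵥ (A.toBlocks₂₁ *ᵥ x + A.toBlocks₂₂ *ᵥ y) =
    x ⬝ᵥ x - y ⬝ᵥ y := by
  have hpres : (A *ᵥ Sum.elim x y) ⬝ᵥ indefiniteDiagonal p q ℝ *ᵥ (A *ᵥ Sum.elim x y) =
      Sum.elim x y ⬝ᵥ indefiniteDiagonal p q ℝ *ᵥ Sum.elim x y := by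
    conv_rhs => rw [← show _ = _ from hA]
    rw [← mulVec_mulVec, ← mulVec_mulVec, dotProduct_mulVec (Sum.elim x y), vecMul_transpose]
  rw [← fromBlocks_toBlocks A, dotProduct_indefiniteDiagonal_mulVec,
    dotProduct_indefiniteDiagonal_mulVec, fromBlocks_mulVec] at hpres
  simpa only [Sum.elim_comp_inl, Sum.elim_comp_inr] using hpres

/-- If `x` is in the kernel, then `B (x, 0) = (u, r)` has `|u|² - |r|² = |x|² > 0`, whereas `A` maps
`(u, t r)` into the negative definite part, which forces `|u|² ≤ t² |r|²`. -/
lemma det_toBlocks₁₁_homotopy_ne_zero {A B : Matrix (p ⊕ q) (p ⊕ q) ℝ}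
    (hA : A ∈ indefiniteOrthogonal p q) (hB : B ∈ indefiniteOrthogonal p q) {t : ℝ}
    (ht : t ∈ Set.Icc (0 : ℝ) 1) :
    (A.toBlocks₁₁ * B.toBlocks₁₁ + t • (A.toBlocks₁₂ * B.toBlocks₂₁)).det ≠ 0 := by
  intro hdet
  obtain ⟨x, hx, hker⟩ := exists_mulVec_eq_zero_iff.2 hdet
  set u := B.toBlocks₁₁ *ᵥ x with hu
  set r := B.toBlocks₂₁ *ᵥ x with hr
  have hAu : A.toBlocks₁₁ *ᵥ u + A.toBlocks₁₂ *ᵥ (t • r) = 0 := by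
    rw [← hker, add_mulVec, smul_mulVec, mulVec_smul, hu, hr, mulVec_mulVec, mulVec_mulVec]
  have hBx : u ⬝ᵥ u - r ⬝ᵥ r = x ⬝ᵥ x := by
    simpa using dotProduct_blocks_of_mem_indefiniteOrthogonal hB x 0
  have hneg : u ⬝ᵥ u - t * (t * r ⬝ᵥ r) ≤ 0 := by
    have hA' := dotProduct_blocks_of_mem_indefiniteOrthogonal hA u (t • r)
    rw [hAu, zero_dotProduct, zero_sub, smul_dotProduct, dotProduct_smul, smul_eq_mul,
      smul_eq_mul] at hA'
    set z := A.toBlocks₂₁ *ᵥ u + A.toBlocks₂₂ *ᵥ (t • r)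
    have hz : 0 ≤ z ⬝ᵥ z := by simpa using dotProduct_star_self_nonneg z
    linarith
  have hx_pos : 0 < x ⬝ᵥ x := by simpa using dotProduct_star_self_pos_iff.2 hx
  have hr_nonneg : 0 ≤ r ⬝ᵥ r := by simpa using dotProduct_star_self_nonneg r
  have htt : t * t ≤ 1 := mul_le_one₀ ht.2 ht.1 ht.2
  nlinarith [mul_le_mul_of_nonneg_right htt hr_nonneg]

variable (p q) in
/-- The character of `O(p, q)` recording whether an element preserves the orientation of maximal
positive definite subspaces. -/
noncomputable def positiveSign : indefiniteOrthogonal p q →* SignType where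
  toFun A := SignType.sign A.val.toBlocks₁₁.det
  map_one' := by
    rw [Submonoid.coe_one, ← fromBlocks_one, toBlocks_fromBlocks₁₁, det_one, sign_one]
  map_mul' A B := by
    have hcont : ContinuousOn (fun t : ℝ ↦ (A.val.toBlocks₁₁ * B.val.toBlocks₁₁ +
        t • (A.val.toBlocks₁₂ * B.val.toBlocks₂₁)).det) (Set.Icc 0 1) := by fun_prop
    have hsign := sign_eq_sign_of_isPreconnected isPreconnected_Icc hcont
      (fun t ht ↦ det_toBlocks₁₁_homotopy_ne_zero A.2 B.2 ht)
      (Set.right_mem_Icc.2 zero_le_one) (Set.left_mem_Icc.2 zero_le_one)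
    have hblock : (A * B).val.toBlocks₁₁ = A.val.toBlocks₁₁ * B.val.toBlocks₁₁ +
        A.val.toBlocks₁₂ * B.val.toBlocks₂₁ := by
      rw [Submonoid.coe_mul, ← fromBlocks_toBlocks A.val, ← fromBlocks_toBlocks B.val,
        fromBlocks_multiply]
      simp only [toBlocks_fromBlocks₁₁, toBlocks_fromBlocks₁₂, toBlocks_fromBlocks₂₁]
    rw [hblock, ← sign_mul, ← det_mul]
    simpa using hsign

end IndefiniteOrthogonal

section Diagonalization

open LieAlgebra.Orthogonal

variable (l : Type*) [Fintype l] [DecidableEq l]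

lemma PD_mul_transpose : PD l ℝ * (PD l ℝ)ᵀ = (2 : ℝ) • 1 := by
  simp [PD, fromBlocks_transpose, fromBlocks_multiply, ← fromBlocks_one, fromBlocks_add, two_smul]

lemma PD_mul_S_mul_transpose : PD l ℝ * S l ℝ * (PD l ℝ)ᵀ = (2 : ℝ) • JD l ℝ := by
  simp [PD, JD, s_as_blocks, fromBlocks_transpose, fromBlocks_multiply, fromBlocks_add, two_smul]

/-- Conjugation by `PD`, that is, passage to the basis `(eᵢ + fᵢ, fᵢ - eᵢ)`. Its vectors are
orthogonal of norm `√2` for the Euclidean form, so the inverse of `PD` is half its transpose. -/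
noncomputable def conjPD : Matrix (l ⊕ l) (l ⊕ l) ℝ →* Matrix (l ⊕ l) (l ⊕ l) ℝ where
  toFun A := (1 / 2 : ℝ) • ((PD l ℝ)ᵀ * A * PD l ℝ)
  map_one' := by
    rw [Matrix.mul_one, ← Matrix.smul_mul, mul_eq_one_comm, Matrix.mul_smul, PD_mul_transpose,
      smul_smul]
    norm_num
  map_mul' A B := by
    calc (1 / 2 : ℝ) • ((PD l ℝ)ᵀ * (A * B) * PD l ℝ)
        = (1 / 4 : ℝ) • ((PD l ℝ)ᵀ * A * ((2 : ℝ) • 1) * B * PD l ℝ) := by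
          simp only [Matrix.mul_smul, Matrix.smul_mul, Matrix.mul_one, smul_smul, Matrix.mul_assoc]
          norm_num
      _ = _ := by
          rw [← PD_mul_transpose]
          simp only [Matrix.mul_smul, Matrix.smul_mul, smul_smul, Matrix.mul_assoc]
          norm_num

variable {l}

lemma conjPD_mem_indefiniteOrthogonal {A : Matrix (l ⊕ l) (l ⊕ l) ℝ}
    (hA : Aᵀ * JD l ℝ * A = JD l ℝ) : conjPD l A ∈ indefiniteOrthogonal l l := by
  set P := PD l ℝ with hP
  calc ((1 / 2 : ℝ) • (Pᵀ * A * P))ᵀ * S l ℝ * ((1 / 2 : ℝ) • (Pᵀ * A * P))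
      = (1 / 4 : ℝ) • (Pᵀ * (Aᵀ * (P * S l ℝ * Pᵀ) * A) * P) := by
        simp only [transpose_smul, transpose_mul, transpose_transpose, Matrix.mul_smul,
          Matrix.smul_mul, smul_smul, Matrix.mul_assoc]
        norm_num
    _ = (1 / 4 : ℝ) • ((2 : ℝ) • (Pᵀ * JD l ℝ * P)) := by
        rw [hP, PD_mul_S_mul_transpose, Matrix.mul_smul, Matrix.smul_mul, hA, Matrix.mul_smul,
          Matrix.smul_mul]
    _ = S l ℝ := by
        rw [hP, jd_transform, smul_smul, smul_smul]
        norm_num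

lemma toBlocks₁₁_conjPD (A : Matrix (l ⊕ l) (l ⊕ l) ℝ) :
    (conjPD l A).toBlocks₁₁ =
      (1 / 2 : ℝ) • (A.toBlocks₁₁ + A.toBlocks₁₂ + A.toBlocks₂₁ + A.toBlocks₂₂) := by
  change (1 / 2 : ℝ) • ((PD l ℝ)ᵀ * A * PD l ℝ).toBlocks₁₁ = _
  congr 1
  rw [← fromBlocks_toBlocks A]
  simp only [PD, fromBlocks_transpose, fromBlocks_multiply, toBlocks_fromBlocks₁₁,
    toBlocks_fromBlocks₁₂, toBlocks_fromBlocks₂₁, toBlocks_fromBlocks₂₂, transpose_one,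
    Matrix.one_mul, Matrix.mul_one]
  abel

end Diagonalization

section HyperbolicForm

open LieAlgebra.Orthogonal

variable {ι R : Type*} [CommRing R]

/-- The index `i` of the hyperbolic plane spanned by `eᵢ` and `fᵢ`. -/
def plane : ι ⊕ ι → ι := Sum.elim id id

@[simp]
lemma plane_swap (a : ι ⊕ ι) : plane a.swap = plane a := by
  cases a <;> rfl

lemma swap_ne_self (a : ι ⊕ ι) : a.swap ≠ a := by
  cases a <;> simp

lemma plane_eq_iff {a b : ι ⊕ ι} : plane a = plane b ↔ a = b ∨ a = b.swap := by
  cases a <;> cases b <;> simp [plane]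

lemma ne_of_plane_ne {a b : ι ⊕ ι} (h : plane a ≠ plane b) : a ≠ b :=
  mt (congrArg plane) h

section RootMatrix

variable [DecidableEq ι]

/-- The root vector `t (E_{a,b} - E_{σb,σa})` of the Lie algebra preserving the hyperbolic form,
where `σ = Sum.swap` exchanges `eᵢ` and `fᵢ`. -/
def rootMatrix (a b : ι ⊕ ι) (t : R) : Matrix (ι ⊕ ι) (ι ⊕ ι) R :=
  single a b t - single b.swap a.swap t

lemma rootMatrix_eq_swap (a b : ι ⊕ ι) (t : R) :
    rootMatrix a b t = rootMatrix b.swap a.swap (-t) := by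
  have hneg (c d : ι ⊕ ι) : single c d (-t) = -single c d t := map_neg (singleAddMonoidHom c d) t
  rw [rootMatrix, rootMatrix, hneg, hneg, Sum.swap_swap, Sum.swap_swap]
  abel

end RootMatrix

variable [Fintype ι]

/-- The bilinear form of the sum of hyperbolic planes: `⟨eᵢ, fᵢ⟩ = ⟨fᵢ, eᵢ⟩ = 1`. -/
def hyperbolicPairing (v w : ι ⊕ ι → R) : R := v ⬝ᵥ (w ∘ Sum.swap)

lemma hyperbolicPairing_eq_sum (v w : ι ⊕ ι → R) :
    hyperbolicPairing v w = ∑ c, v c * w c.swap := rfl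

/-- A hyperbolic pair: two isotropic vectors with pairing `1`. -/
structure IsHyperbolicPair (v w : ι ⊕ ι → R) : Prop where
  left_isotropic : hyperbolicPairing v v = 0
  right_isotropic : hyperbolicPairing w w = 0
  pairing_eq_one : hyperbolicPairing v w = 1

lemma hyperbolicPairing_self_eq_two_mul {v : ι ⊕ ι → R} {p : ι ⊕ ι}
    (h : ∀ c, plane c ≠ plane p → v c * v c.swap = 0) :
    hyperbolicPairing v v = 2 * (v p * v p.swap) := by
  classical
  have hoff : ∀ c ∈ Finset.univ, c ∉ ({p, p.swap} : Finset (ι ⊕ ι)) → v c * v c.swap = 0 := by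
    intro c _ hc
    exact h c (by simpa [plane_eq_iff] using hc)
  rw [hyperbolicPairing_eq_sum, ← Finset.sum_subset (Finset.subset_univ _) hoff,
    Finset.sum_pair (swap_ne_self p).symm, Sum.swap_swap]
  ring

variable [DecidableEq ι]

lemma JD_mulVec (v : ι ⊕ ι → R) : JD ι R *ᵥ v = v ∘ Sum.swap := by
  ext c
  cases c <;> simp [JD, fromBlocks_mulVec]

lemma hyperbolicPairing_mulVec {A : Matrix (ι ⊕ ι) (ι ⊕ ι) R} (hA : Aᵀ * JD ι R * A = JD ι R)
    (v w : ι ⊕ ι → R) : hyperbolicPairing (A *ᵥ v) (A *ᵥ w) = hyperbolicPairing v w := by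
  simp only [hyperbolicPairing, ← JD_mulVec]
  conv_rhs => rw [← hA]
  rw [← mulVec_mulVec, ← mulVec_mulVec, dotProduct_mulVec v, vecMul_transpose]

@[simp]
lemma hyperbolicPairing_single_left (v : ι ⊕ ι → R) (p : ι ⊕ ι) :
    hyperbolicPairing (Pi.single p 1) v = v p.swap := by
  rw [hyperbolicPairing, single_one_dotProduct, Function.comp_apply]

lemma eq_single_of_isotropic [NoZeroDivisors R] [NeZero (2 : R)] {v : ι ⊕ ι → R}
    (hv : hyperbolicPairing v v = 0) (hv0 : v ≠ 0)
    (hpair : ∀ a b, plane a ≠ plane b → v a ≠ 0 → v b ≠ 0 → ¬(v a.swap = 0 ↔ v b.swap = 0)) :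
    ∃ a d, v = Pi.single a d := by
  have hswap (p : ι ⊕ ι) (hp : v p ≠ 0) : v p.swap = 0 := by
    by_contra hp'
    have hoff (c : ι ⊕ ι) (hc : plane c ≠ plane p) : v c * v c.swap = 0 := by
      by_contra hcc
      obtain ⟨hc0, hc0'⟩ := mul_ne_zero_iff.1 hcc
      exact hpair c p hc hc0 hp (iff_of_false hc0' hp')
    rw [hyperbolicPairing_self_eq_two_mul hoff] at hv
    simp [hp, hp', two_ne_zero] at hv
  obtain ⟨a, ha⟩ := Function.ne_iff.1 hv0
  refine ⟨a, v a, funext fun c ↦ ?_⟩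
  by_cases hca : c = a
  · rw [hca, Pi.single_eq_same]
  rw [Pi.single_eq_of_ne hca]
  by_contra hc
  have hplane : plane c ≠ plane a := fun h ↦
    (plane_eq_iff.1 h).elim hca fun h ↦ hc (h ▸ hswap a ha)
  exact hpair c a hplane hc ha (iff_of_true (hswap c hc) (hswap a ha))

lemma isHyperbolicPair_single (p : ι ⊕ ι) :
    IsHyperbolicPair (Pi.single p 1 : ι ⊕ ι → R) (Pi.single p.swap 1) where
  left_isotropic := by simp [swap_ne_self]
  right_isotropic := by simp [(swap_ne_self p).symm]
  pairing_eq_one := by simp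

lemma JD_mul_JD : JD ι R * JD ι R = 1 := by
  simp [JD, fromBlocks_multiply]

lemma map_transpose_mul_JD_mul_map {S : Type*} [CommRing S] (f : R →+* S)
    {A : Matrix (ι ⊕ ι) (ι ⊕ ι) R} (hA : Aᵀ * JD ι R * A = JD ι R) :
    (A.map f)ᵀ * JD ι S * A.map f = JD ι S := by
  have hJD : (JD ι R).map f = JD ι S := by simp [JD, fromBlocks_map]
  rw [← hJD, ← transpose_map, ← Matrix.map_mul, ← Matrix.map_mul, hA]

lemma JD_mul_single (a b : ι ⊕ ι) (t : R) : JD ι R * single a b t = single a.swap b t := by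
  cases a <;> ext (i | i) j <;>
    simp [JD, mul_apply, fromBlocks, single_apply, one_apply, ite_and, eq_comm] <;> grind

lemma single_mul_JD (a b : ι ⊕ ι) (t : R) : single a b t * JD ι R = single a b.swap t := by
  have hJD : (JD ι R)ᵀ = JD ι R := by simp [JD, fromBlocks_transpose]
  simpa [transpose_mul, hJD] using congrArg transpose (JD_mul_single b a t)

lemma isSkewAdjoint_rootMatrix (a b : ι ⊕ ι) (t : R) :
    (JD ι R).IsSkewAdjoint (rootMatrix a b t) := by
  simp only [Matrix.IsSkewAdjoint, Matrix.IsAdjointPair, rootMatrix, transpose_sub,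
    transpose_single, Matrix.sub_mul, single_mul_JD, Matrix.mul_sub, JD_mul_single,
    Sum.swap_swap, neg_sub]

lemma rootMatrix_mul_rootMatrix_eq_zero {a b c d : ι ⊕ ι} (hbc : b ≠ c) (had : a ≠ d)
    (hbd : b ≠ d.swap) (hac : a ≠ c.swap) (s t : R) : rootMatrix a b s * rootMatrix c d t = 0 := by
  have had' : a.swap ≠ d.swap := Sum.swap_leftInverse.injective.ne had
  have hac' : a.swap ≠ c := fun h ↦ hac (by rw [← h, Sum.swap_swap])
  simp only [rootMatrix, Matrix.sub_mul, Matrix.mul_sub, single_mul_single_of_ne _ _ _ _ hbc,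
    single_mul_single_of_ne _ _ _ _ hbd, single_mul_single_of_ne _ _ _ _ had',
    single_mul_single_of_ne _ _ _ _ hac', sub_zero]

lemma rootMatrix_mul_rootMatrix_adjacent {a b c : ι ⊕ ι} (hab : plane a ≠ plane b)
    (hbc : plane b ≠ plane c) (hac : plane a ≠ plane c) (s t : R) :
    rootMatrix a b s * rootMatrix b c t = single a c (s * t) := by
  have hbc' : b ≠ c.swap := ne_of_plane_ne (by simpa using hbc)
  have hab' : a.swap ≠ b := ne_of_plane_ne (by simpa using hab)
  have hac' : a.swap ≠ c.swap := ne_of_plane_ne (by simpa using hac)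
  simp only [rootMatrix, Matrix.sub_mul, Matrix.mul_sub, single_mul_single_same,
    single_mul_single_of_ne _ _ _ _ hbc', single_mul_single_of_ne _ _ _ _ hab',
    single_mul_single_of_ne _ _ _ _ hac', sub_zero]

lemma rootMatrix_commutator {a b c : ι ⊕ ι} (hab : plane a ≠ plane b)
    (hbc : plane b ≠ plane c) (hac : plane a ≠ plane c) (s t : R) :
    rootMatrix a b s * rootMatrix b c t - rootMatrix b c t * rootMatrix a b s =
      rootMatrix a c (s * t) := by
  have hrev : rootMatrix b c t * rootMatrix a b s = single c.swap a.swap (s * t) := by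
    rw [rootMatrix_eq_swap b, rootMatrix_eq_swap a, rootMatrix_mul_rootMatrix_adjacent
      (by simpa using hbc.symm) (by simpa using hab.symm) (by simpa using hac.symm),
      neg_mul_neg, mul_comm]
  rw [rootMatrix_mul_rootMatrix_adjacent hab hbc hac, hrev, rootMatrix]

lemma rootMatrix_mul_self {a b : ι ⊕ ι} (h : plane a ≠ plane b) (t : R) :
    rootMatrix a b t * rootMatrix a b t = 0 :=
  rootMatrix_mul_rootMatrix_eq_zero (ne_of_plane_ne h).symm (ne_of_plane_ne h)
    (swap_ne_self b).symm (swap_ne_self a).symm t t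

lemma rootMatrix_mulVec (a b : ι ⊕ ι) (t : R) (v : ι ⊕ ι → R) :
    rootMatrix a b t *ᵥ v = Pi.single a (t * v b) - Pi.single b.swap (t * v a.swap) := by
  simp only [rootMatrix, sub_mulVec, single_mulVec]
  rfl

end HyperbolicForm

section Unipotent

lemma transpose_mul_mul_one_add {n R : Type*} [Fintype n] [DecidableEq n] [CommRing R]
    {J X : Matrix n n R} (hJ : J.IsSkewAdjoint X) (hX : X * X = 0) :
    (1 + X)ᵀ * J * (1 + X) = J := by
  have hJ' : Xᵀ * J = -(J * X) := by rw [← Matrix.mul_neg]; exact hJ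
  rw [transpose_add, transpose_one, Matrix.add_mul, Matrix.one_mul, hJ', Matrix.add_mul,
    Matrix.mul_add, Matrix.mul_one, Matrix.neg_mul, Matrix.mul_add, Matrix.mul_one,
    Matrix.mul_assoc, hX, Matrix.mul_zero]
  abel

lemma one_add_mul_one_add_eq {R : Type*} [Ring R] {x y z : R} (hz : x * y - y * x = z)
    (hzx : z * x = 0) (hzy : z * y = 0) :
    (1 + x) * (1 + y) = (1 + z) * ((1 + y) * (1 + x)) := by
  simp only [add_mul, mul_add, one_mul, mul_one, ← mul_assoc, hzx, hzy, zero_mul]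
  rw [← hz]
  abel

end Unipotent

namespace Ogg

open commutatorElement

variable {n : ℕ}

section Elementary

lemma transpose_mul_Qmat_mul (A : Ogg n) : A.val.valᵀ * Qmat n * A.val.val = Qmat n := A.2

@[ext]
lemma ext {A B : Ogg n} (h : A.val.val = B.val.val) : A = B :=
  Subtype.ext (Units.ext h)

/-- A matrix preserving the hyperbolic form, as an element of `Ogg n`; its inverse is `Q * Aᵀ * Q`
since `Q * Q = 1`. -/
def ofMatrix (A : Matrix (HypIdx n) (HypIdx n) ℤ) (hA : Aᵀ * Qmat n * A = Qmat n) : Ogg n :=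
  have hinv : Qmat n * Aᵀ * Qmat n * A = 1 := by
    rw [Matrix.mul_assoc, Matrix.mul_assoc, ← Matrix.mul_assoc Aᵀ, hA]
    exact JD_mul_JD
  ⟨⟨A, Qmat n * Aᵀ * Qmat n, mul_eq_one_comm.1 hinv, hinv⟩, hA⟩

@[simp]
lemma val_ofMatrix (A : Matrix (HypIdx n) (HypIdx n) ℤ) (hA : Aᵀ * Qmat n * A = Qmat n) :
    (ofMatrix A hA).val.val = A := rfl

lemma smul_eq_mulVec (A : Ogg n) (v : HypIdx n → ℤ) : A • v = A.val.val *ᵥ v := rfl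

/-- The elementary (Eichler) transformation `1 + t (E_{a,b} - E_{σb,σa})` of the hyperbolic
lattice. -/
def elementary (a b : HypIdx n) (h : plane a ≠ plane b) (t : ℤ) : Ogg n :=
  ofMatrix (1 + rootMatrix a b t)
    (transpose_mul_mul_one_add (isSkewAdjoint_rootMatrix a b t) (rootMatrix_mul_self h t))

@[simp]
lemma val_elementary (a b : HypIdx n) (h : plane a ≠ plane b) (t : ℤ) :
    (elementary a b h t).val.val = 1 + rootMatrix a b t := rfl

lemma elementary_smul (a b : HypIdx n) (h : plane a ≠ plane b) (t : ℤ) (v : HypIdx n → ℤ) :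
    elementary a b h t • v = v + Pi.single a (t * v b) - Pi.single b.swap (t * v a.swap) := by
  rw [smul_eq_mulVec, val_elementary, add_mulVec, one_mulVec, rootMatrix_mulVec, add_sub_assoc]

variable (n) in
/-- The subgroup `EO(n, n)` generated by the elementary transformations. -/
def elementarySubgroup : Subgroup (Ogg n) :=
  Subgroup.closure {E | ∃ a b, ∃ h : plane a ≠ plane b, ∃ t, elementary a b h t = E}

lemma elementary_mem (a b : HypIdx n) (h : plane a ≠ plane b) (t : ℤ) :
    elementary a b h t ∈ elementarySubgroup n :=
  Subgroup.subset_closure ⟨a, b, h, t, rfl⟩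

lemma elementary_eq_commutatorElement {a b c : HypIdx n} (hab : plane a ≠ plane b)
    (hbc : plane b ≠ plane c) (hac : plane a ≠ plane c) (t : ℤ) :
    elementary a c hac t = ⁅elementary a b hab t, elementary b c hbc 1⁆ := by
  rw [commutatorElement_def, eq_mul_inv_iff_mul_eq, eq_mul_inv_iff_mul_eq, mul_assoc]
  ext1
  refine (one_add_mul_one_add_eq ?_ ?_ ?_).symm
  · simpa using rootMatrix_commutator hab hbc hac t 1
  · exact rootMatrix_mul_rootMatrix_eq_zero (ne_of_plane_ne hac.symm) (ne_of_plane_ne hab)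
      (ne_of_plane_ne (by simpa using hbc.symm)) (swap_ne_self a).symm t t
  · exact rootMatrix_mul_rootMatrix_eq_zero (ne_of_plane_ne hbc.symm) (ne_of_plane_ne hac)
      (swap_ne_self c).symm (ne_of_plane_ne (by simpa using hab)) t 1

lemma elementarySubgroup_le_commutator (hn : 3 ≤ n) :
    elementarySubgroup n ≤ commutator (Ogg n) := by
  rw [elementarySubgroup, Subgroup.closure_le]
  rintro _ ⟨a, c, hac, t, rfl⟩
  obtain ⟨i, hi⟩ := Finset.exists_mem_notMem_of_card_lt_card (s := {plane a, plane c})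
    (t := (Finset.univ : Finset (Fin n)))
    (Finset.card_le_two.trans_lt (by rw [Finset.card_univ, Fintype.card_fin]; omega))
  obtain ⟨hia, hic⟩ : i ≠ plane a ∧ i ≠ plane c := by simpa using hi.2
  rw [SetLike.mem_coe, elementary_eq_commutatorElement (b := Sum.inl i) hia.symm hic hac]
  exact Subgroup.commutator_mem_commutator (Subgroup.mem_top _) (Subgroup.mem_top _)

end Elementary

section Orbits

lemma hyperbolicPairing_smul (A : Ogg n) (v w : HypIdx n → ℤ) :
    hyperbolicPairing (A • v) (A • w) = hyperbolicPairing v w :=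
  hyperbolicPairing_mulVec (transpose_mul_Qmat_mul A) v w

lemma elementary_smul_mem_orbit (a b : HypIdx n) (h : plane a ≠ plane b) (t : ℤ)
    (v : HypIdx n → ℤ) :
    elementary a b h t • v ∈ MulAction.orbit (elementarySubgroup n) v :=
  ⟨⟨elementary a b h t, elementary_mem a b h t⟩, rfl⟩

/-- Elementary transformations run the Euclidean algorithm on a pair of coordinates. -/
lemma exists_mem_orbit_apply_eq_zero {a b : HypIdx n} (hab : plane a ≠ plane b)
    (v : HypIdx n → ℤ) :
    ∃ w ∈ MulAction.orbit (elementarySubgroup n) v, (w a = 0 ∨ w b = 0) ∧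
      (∀ c, plane c ≠ plane a → plane c ≠ plane b → w c = v c) ∧
      (v a.swap = 0 → v b.swap = 0 → w a.swap = 0 ∧ w b.swap = 0) := by
  induction hx : v a, hy : v b using EuclideanDomain.GCD.induction generalizing a b v with
  | H0 y => exact ⟨v, MulAction.mem_orbit_self v, Or.inl hx, fun _ _ _ ↦ rfl, And.intro⟩
  | H1 x y _ ih =>
    set u := elementary b a hab.symm (-(y / x)) • v with hu
    have hu_apply (c : HypIdx n) (hca : c ≠ a.swap) (hcb : c ≠ b) : u c = v c := by
      simp [hu, elementary_smul, hca, hcb]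
    have hua : u a = x := by
      rw [hu_apply a (swap_ne_self a).symm (ne_of_plane_ne hab), hx]
    have hub : u b = y % x := by
      have hba : b ≠ a.swap := ne_of_plane_ne (by simpa using hab.symm)
      rw [hu, elementary_smul, Pi.sub_apply, Pi.add_apply, Pi.single_eq_same,
        Pi.single_eq_of_ne hba, hx, hy, Int.emod_def]
      ring
    have hu_swap (ha : v a.swap = 0) (hb : v b.swap = 0) : u a.swap = 0 ∧ u b.swap = 0 := by
      have hab' : a.swap ≠ b := ne_of_plane_ne (by simpa using hab)
      simp [hu, elementary_smul, hab', swap_ne_self, ha, hb]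
    obtain ⟨w, hw, hzero, hfix, hswap⟩ := ih hab.symm u hub hua
    refine ⟨w, ?_, hzero.symm, fun c hca hcb ↦ ?_, fun ha hb ↦ ?_⟩
    · rwa [← MulAction.orbit_eq_iff.2 (elementary_smul_mem_orbit b a hab.symm _ v)]
    · rw [hfix c hcb hca, hu_apply c (ne_of_plane_ne (by simpa using hca)) (ne_of_plane_ne hcb)]
    · exact (hswap (hu_swap ha hb).2 (hu_swap ha hb).1).symm

lemma exists_mem_orbit_support_ssubset {a b : HypIdx n} (hab : plane a ≠ plane b)
    {v : HypIdx n → ℤ} (ha : v a ≠ 0) (hb : v b ≠ 0) (hswap : v a.swap = 0 ↔ v b.swap = 0) :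
    ∃ w ∈ MulAction.orbit (elementarySubgroup n) v, Function.support w ⊂ Function.support v := by
  obtain ⟨w, hw, hzero, hfix, hw_swap⟩ := exists_mem_orbit_apply_eq_zero hab v
  have hsubset : Function.support w ⊆ Function.support v := by
    refine fun c ↦ mt fun hvc ↦ ?_
    by_cases hca : plane c = plane a
    · rcases plane_eq_iff.1 hca with rfl | rfl
      exacts [absurd hvc ha, (hw_swap hvc (hswap.1 hvc)).1]
    · by_cases hcb : plane c = plane b
      · rcases plane_eq_iff.1 hcb with rfl | rfl
        exacts [absurd hvc hb, (hw_swap (hswap.2 hvc) hvc).2]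
      · rw [hfix c hca hcb, hvc]
  refine ⟨w, hw, (Set.ssubset_iff_of_subset hsubset).2 ?_⟩
  rcases hzero with h | h
  exacts [⟨a, ha, not_not.2 h⟩, ⟨b, hb, not_not.2 h⟩]

lemma exists_single_mem_orbit {v : HypIdx n → ℤ} (hv : hyperbolicPairing v v = 0) (hv0 : v ≠ 0) :
    ∃ a d, Pi.single a d ∈ MulAction.orbit (elementarySubgroup n) v := by
  obtain ⟨w, hw, hmin⟩ := exists_minimalFor_of_wellFoundedLT
    (· ∈ MulAction.orbit (elementarySubgroup n) v) Function.support ⟨v, MulAction.mem_orbit_self v⟩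
  obtain ⟨E, rfl⟩ := hw
  obtain ⟨a, d, had⟩ := eq_single_of_isotropic (v := E • v)
    ((hyperbolicPairing_smul E.1 v v).trans hv) (smul_ne_zero_iff_ne E |>.2 hv0)
    fun a b hab ha hb hswap ↦ by
      obtain ⟨u, hu, hlt⟩ := exists_mem_orbit_support_ssubset hab ha hb hswap
      rw [MulAction.orbit_smul] at hu
      exact hlt.2 (hmin hu hlt.1)
  exact ⟨a, d, had ▸ MulAction.mem_orbit v E⟩

end Orbits

section HyperbolicPairs

lemma isHyperbolicPair_smul {v w : HypIdx n → ℤ} (h : IsHyperbolicPair v w) (A : Ogg n) :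
    IsHyperbolicPair (A • v) (A • w) where
  left_isotropic := (hyperbolicPairing_smul A v v).trans h.left_isotropic
  right_isotropic := (hyperbolicPairing_smul A w w).trans h.right_isotropic
  pairing_eq_one := (hyperbolicPairing_smul A v w).trans h.pairing_eq_one

lemma single_one_mem_orbit_of_plane_ne {a b : HypIdx n} (hab : plane a ≠ plane b) {d : ℤ}
    (hd : IsUnit d) :
    Pi.single b 1 ∈ MulAction.orbit (elementarySubgroup n) (Pi.single a d : HypIdx n → ℤ) := by
  have hba' : b.swap ≠ a := ne_of_plane_ne (by simpa using hab.symm)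
  have hab' : a.swap ≠ b := ne_of_plane_ne (by simpa using hab)
  have hadd : elementary b a hab.symm d • (Pi.single a d : HypIdx n → ℤ) =
      Pi.single a d + Pi.single b 1 := by
    simp [elementary_smul, hba', Int.isUnit_mul_self hd]
  have hsub : elementary a b hab (-d) • (Pi.single a d + Pi.single b 1 : HypIdx n → ℤ) =
      Pi.single b 1 := by
    simp [elementary_smul, hab', swap_ne_self, ne_of_plane_ne hab.symm, Pi.single_neg]
  refine ⟨⟨elementary a b hab (-d) * elementary b a hab.symm d,
    mul_mem (elementary_mem _ _ _ _) (elementary_mem _ _ _ _)⟩, ?_⟩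
  change (elementary a b hab (-d) * elementary b a hab.symm d) • (Pi.single a d : _ → ℤ) = _
  rw [mul_smul, hadd, hsub]

lemma single_one_mem_orbit (hn : 2 ≤ n) (a b : HypIdx n) {d : ℤ} (hd : IsUnit d) :
    Pi.single b 1 ∈ MulAction.orbit (elementarySubgroup n) (Pi.single a d : HypIdx n → ℤ) := by
  by_cases hab : plane a = plane b
  · have : Nontrivial (Fin n) := Fin.nontrivial_iff_two_le.2 hn
    obtain ⟨i, hi⟩ := exists_ne (plane a)
    rw [← MulAction.orbit_eq_iff.2
      (single_one_mem_orbit_of_plane_ne (b := Sum.inl i) hi.symm hd)]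
    exact single_one_mem_orbit_of_plane_ne (hab ▸ hi) isUnit_one
  · exact single_one_mem_orbit_of_plane_ne hab hd

lemma exists_smul_eq_single (hn : 2 ≤ n) {v w : HypIdx n → ℤ} (h : IsHyperbolicPair v w)
    (p : HypIdx n) : ∃ E : elementarySubgroup n, E • v = Pi.single p 1 := by
  have hv0 : v ≠ 0 := by
    rintro rfl
    simpa [hyperbolicPairing] using h.pairing_eq_one
  obtain ⟨a, d, E, hE⟩ := exists_single_mem_orbit h.left_isotropic hv0
  have hd : IsUnit d := by
    have hpair := (isHyperbolicPair_smul h E.1).pairing_eq_one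
    rw [show E.1 • v = Pi.single a d from hE, hyperbolicPairing, single_dotProduct] at hpair
    exact .of_mul_eq_one _ hpair
  have hp := single_one_mem_orbit hn a p hd
  rwa [MulAction.orbit_eq_iff.2 (⟨E, hE⟩ : Pi.single a d ∈ MulAction.orbit _ v)] at hp

/-- A coordinate `c` in another plane is cleared by adding a multiple of the coordinate `p.swap`,
which equals `1`; such a transformation fixes the basis vector `p`. -/
lemma exists_mem_orbit_forall_apply_eq_zero (p : HypIdx n) {w : HypIdx n → ℤ} (hw : w p.swap = 1)
    (s : Finset (HypIdx n)) :
    ∃ u : HypIdx n → ℤ, (Pi.single p 1, u) ∈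
        MulAction.orbit (elementarySubgroup n) ((Pi.single p 1 : HypIdx n → ℤ), w) ∧
      u p.swap = 1 ∧ ∀ c ∈ s, plane c ≠ plane p → u c = 0 := by
  induction s using Finset.induction_on with
  | empty => exact ⟨w, MulAction.mem_orbit_self _, hw, by simp⟩
  | insert c s _ ih =>
    obtain ⟨u, hu, hup, hus⟩ := ih
    by_cases hc : plane c = plane p
    · refine ⟨u, hu, hup, fun a ha hap ↦ hus a (Finset.mem_of_mem_insert_of_ne ha ?_) hap⟩
      rintro rfl
      exact hap hc
    have hcp : plane c ≠ plane p.swap := by simpa using hc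
    have hc_swap : c.swap ≠ p := ne_of_plane_ne (by simpa using hc)
    have hpc : p.swap ≠ c := (ne_of_plane_ne hcp).symm
    set E := elementary c p.swap hcp (-(u c))
    have hEp : E • (Pi.single p 1 : HypIdx n → ℤ) = Pi.single p 1 := by
      simp [E, elementary_smul, swap_ne_self, hc_swap]
    have hEu (a : HypIdx n) (ha : a ≠ p) : (E • u) a = if a = c then 0 else u a := by
      by_cases hac : a = c
      · subst hac
        simp [E, elementary_smul, ha, hup]
      · simp [E, elementary_smul, ha, hac]
    refine ⟨E • u, ?_, by rw [hEu _ (swap_ne_self p), if_neg hpc, hup], fun a ha hap ↦ ?_⟩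
    · rw [← MulAction.orbit_eq_iff.2 hu]
      exact ⟨⟨E, elementary_mem _ _ _ _⟩, Prod.ext hEp rfl⟩
    · rw [hEu a (ne_of_plane_ne hap), ite_eq_left_iff]
      exact fun hac ↦ hus a (Finset.mem_of_mem_insert_of_ne ha hac) hap

lemma single_swap_mem_orbit (p : HypIdx n) {w : HypIdx n → ℤ}
    (h : IsHyperbolicPair (Pi.single p 1) w) :
    (Pi.single p 1, Pi.single p.swap 1) ∈
      MulAction.orbit (elementarySubgroup n) ((Pi.single p 1 : HypIdx n → ℤ), w) := by
  obtain ⟨u, hu, hup, hoff⟩ := exists_mem_orbit_forall_apply_eq_zero p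
    (by simpa using h.pairing_eq_one) Finset.univ
  suffices u = Pi.single p.swap 1 from this ▸ hu
  obtain ⟨E, hE⟩ := hu
  have hu_isotropic : hyperbolicPairing u u = 0 := by
    rw [← show E.1 • w = u from congrArg Prod.snd hE]
    exact (isHyperbolicPair_smul h E.1).right_isotropic
  have hup0 : u p = 0 := by
    rw [hyperbolicPairing_self_eq_two_mul
      fun c hc ↦ by rw [hoff c (Finset.mem_univ c) hc, zero_mul], hup] at hu_isotropic
    linarith
  ext c
  by_cases hc : plane c = plane p
  · rcases plane_eq_iff.1 hc with rfl | rfl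
    · rw [hup0, Pi.single_eq_of_ne (swap_ne_self c).symm]
    · rw [hup, Pi.single_eq_same]
  · rw [hoff c (Finset.mem_univ c) hc,
      Pi.single_eq_of_ne (ne_of_plane_ne (by simpa using hc))]

lemma exists_smul_hyperbolicPair_eq_single (hn : 2 ≤ n) {v w : HypIdx n → ℤ}
    (h : IsHyperbolicPair v w) (p : HypIdx n) :
    ∃ E : elementarySubgroup n, E • v = Pi.single p 1 ∧ E • w = Pi.single p.swap 1 := by
  obtain ⟨E₁, hE₁⟩ := exists_smul_eq_single hn h p
  have h₁ : IsHyperbolicPair (Pi.single p 1) (E₁ • w) := hE₁ ▸ isHyperbolicPair_smul h E₁.1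
  obtain ⟨E₂, hE₂⟩ := single_swap_mem_orbit p h₁
  rw [Prod.ext_iff] at hE₂
  exact ⟨E₂ * E₁, by rw [mul_smul, hE₁]; exact hE₂.1, by rw [mul_smul]; exact hE₂.2⟩

end HyperbolicPairs

section Stabilization

variable (n) in
/-- The basis indices of the first `n` hyperbolic planes together with those of the additional
one. -/
def hypIdxSuccEquiv : HypIdx n ⊕ HypIdx 1 ≃ HypIdx (n + 1) :=
  (Equiv.sumSumSumComm _ _ _ _).trans (Equiv.sumCongr finSumFinEquiv finSumFinEquiv)

lemma extendMat_submatrix (A : Matrix (HypIdx n) (HypIdx n) ℤ) :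
    (extendMat A).submatrix (hypIdxSuccEquiv n) (hypIdxSuccEquiv n) = fromBlocks A 0 0 1 := by
  ext i j
  rcases i with (i | i) | (i | i) <;> rcases j with (j | j) | (j | j) <;>
    simp [hypIdxSuccEquiv, extendMat, one_apply, Fin.ext_iff] <;> omega

variable (n) in
lemma Qmat_submatrix :
    (Qmat (n + 1)).submatrix (hypIdxSuccEquiv n) (hypIdxSuccEquiv n) =
      fromBlocks (Qmat n) 0 0 (Qmat 1) := by
  ext i j
  rcases i with (i | i) | (i | i) <;> rcases j with (j | j) | (j | j) <;>
    simp [hypIdxSuccEquiv, Qmat, one_apply, Fin.ext_iff] <;> omega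

lemma submatrix_hypIdxSuccEquiv_inj {A B : Matrix (HypIdx (n + 1)) (HypIdx (n + 1)) ℤ} :
    A.submatrix (hypIdxSuccEquiv n) (hypIdxSuccEquiv n) =
      B.submatrix (hypIdxSuccEquiv n) (hypIdxSuccEquiv n) ↔ A = B :=
  (reindex (hypIdxSuccEquiv n).symm (hypIdxSuccEquiv n).symm).injective.eq_iff

lemma extendMat_one : extendMat (1 : Matrix (HypIdx n) (HypIdx n) ℤ) = 1 := by
  rw [← submatrix_hypIdxSuccEquiv_inj]
  simp only [extendMat_submatrix, submatrix_one_equiv, fromBlocks_one]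

lemma extendMat_mul (A B : Matrix (HypIdx n) (HypIdx n) ℤ) :
    extendMat (A * B) = extendMat A * extendMat B := by
  rw [← submatrix_hypIdxSuccEquiv_inj, ← submatrix_mul_equiv _ _ _ (hypIdxSuccEquiv n)]
  simp [extendMat_submatrix, fromBlocks_multiply]

lemma extendMat_preserves_iff (A : Matrix (HypIdx n) (HypIdx n) ℤ) :
    (extendMat A)ᵀ * Qmat (n + 1) * extendMat A = Qmat (n + 1) ↔ Aᵀ * Qmat n * A = Qmat n := by
  rw [← submatrix_hypIdxSuccEquiv_inj, ← submatrix_mul_equiv _ _ _ (hypIdxSuccEquiv n),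
    ← submatrix_mul_equiv _ _ _ (hypIdxSuccEquiv n), ← transpose_submatrix, extendMat_submatrix,
    Qmat_submatrix]
  simp [fromBlocks_transpose, fromBlocks_multiply]

variable (n) in
/-- The block inclusion `A ↦ A ⊕ 1`. -/
def stabilization : Ogg n →* Ogg (n + 1) where
  toFun A := ofMatrix (extendMat A.val.val)
    ((extendMat_preserves_iff _).2 (transpose_mul_Qmat_mul A))
  map_one' := ext (by simp [extendMat_one])
  map_mul' A B := ext (by simp [extendMat_mul])

@[simp]
lemma val_stabilization (A : Ogg n) : (stabilization n A).val.val = extendMat A.val.val := rfl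

/-- The remaining block of `A` vanishes since `A` preserves the orthogonal complement of the last
plane. -/
lemma mem_range_stabilization {A : Ogg (n + 1)}
    (hA : ∀ p, A.val.val *ᵥ Pi.single (hypIdxSuccEquiv n (Sum.inr p)) 1 =
      Pi.single (hypIdxSuccEquiv n (Sum.inr p)) 1) :
    A ∈ (stabilization n).range := by
  set M := A.val.val.submatrix (hypIdxSuccEquiv n) (hypIdxSuccEquiv n) with hM
  have hcol (c : HypIdx n ⊕ HypIdx 1) (p : HypIdx 1) :
      M c (Sum.inr p) = if c = Sum.inr p then 1 else 0 := by
    simpa [hM, Pi.single_apply] using congrFun (hA p) (hypIdxSuccEquiv n c)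
  have h₁₂ : M.toBlocks₁₂ = 0 := by
    ext i p
    simp [toBlocks₁₂, hcol]
  have h₂₂ : M.toBlocks₂₂ = 1 := by
    ext i p
    simp [toBlocks₂₂, hcol, one_apply]
  have hform : Mᵀ * fromBlocks (Qmat n) 0 0 (Qmat 1) * M = fromBlocks (Qmat n) 0 0 (Qmat 1) := by
    rw [← Qmat_submatrix, hM, transpose_submatrix, submatrix_mul_equiv, submatrix_mul_equiv,
      transpose_mul_Qmat_mul]
  have h₂₁ : M.toBlocks₂₁ = 0 := by
    rw [← fromBlocks_toBlocks M, h₁₂, h₂₂] at hform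
    have hQ : Qmat 1 * M.toBlocks₂₁ = 0 := by
      simpa [fromBlocks_transpose, fromBlocks_multiply] using congrArg toBlocks₂₁ hform
    have hQQ : Qmat 1 * Qmat 1 = 1 := JD_mul_JD
    rw [← Matrix.one_mul M.toBlocks₂₁, ← hQQ, Matrix.mul_assoc, hQ, Matrix.mul_zero]
  have hext : extendMat M.toBlocks₁₁ = A.val.val := by
    rw [← submatrix_hypIdxSuccEquiv_inj, extendMat_submatrix, ← hM,
      ← fromBlocks_toBlocks M, h₁₂, h₂₁, h₂₂, toBlocks_fromBlocks₁₁]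
  have hA' := transpose_mul_Qmat_mul A
  rw [← hext] at hA'
  exact ⟨ofMatrix _ ((extendMat_preserves_iff _).1 hA'), ext hext⟩

lemma exists_eq_mul_stabilization (hn : 1 ≤ n) (A : Ogg (n + 1)) :
    ∃ E ∈ elementarySubgroup (n + 1), ∃ B, A = E * stabilization n B := by
  set p : HypIdx (n + 1) := hypIdxSuccEquiv n (Sum.inr (Sum.inl 0))
  obtain ⟨E, hE, hE_swap⟩ := exists_smul_hyperbolicPair_eq_single (by omega)
    (isHyperbolicPair_smul (isHyperbolicPair_single p) A) p
  obtain ⟨B, hB⟩ : E.1 * A ∈ (stabilization n).range := by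
    refine mem_range_stabilization fun q ↦ ?_
    rw [← smul_eq_mulVec, mul_smul]
    rcases q with q | q <;> rw [Subsingleton.elim q 0]
    exacts [hE, hE_swap]
  exact ⟨E.1⁻¹, inv_mem E.2, B, by rw [hB, inv_mul_cancel_left]⟩

lemma extendMat_one_add_rootMatrix (a b : HypIdx n) (t : ℤ) :
    extendMat (1 + rootMatrix a b t) =
      1 + rootMatrix (hypIdxSuccEquiv n (Sum.inl a)) (hypIdxSuccEquiv n (Sum.inl b)) t := by
  have hswap (c : HypIdx n) :
      (hypIdxSuccEquiv n (Sum.inl c)).swap = hypIdxSuccEquiv n (Sum.inl c.swap) := by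
    cases c <;> rfl
  rw [← submatrix_hypIdxSuccEquiv_inj, extendMat_submatrix, rootMatrix, rootMatrix, hswap, hswap]
  ext (i | i) (j | j) <;> simp [single_apply, one_apply]

lemma stabilization_mem_elementarySubgroup {E : Ogg n} (hE : E ∈ elementarySubgroup n) :
    stabilization n E ∈ elementarySubgroup (n + 1) := by
  suffices elementarySubgroup n ≤ (elementarySubgroup (n + 1)).comap (stabilization n) from this hE
  rw [elementarySubgroup, Subgroup.closure_le]
  rintro _ ⟨a, b, hab, t, rfl⟩
  have hplane : plane (hypIdxSuccEquiv n (Sum.inl a)) ≠ plane (hypIdxSuccEquiv n (Sum.inl b)) := by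
    cases a <;> cases b <;> simpa [hypIdxSuccEquiv, plane] using hab
  have helem : stabilization n (elementary a b hab t) = elementary _ _ hplane t :=
    ext (extendMat_one_add_rootMatrix a b t)
  exact Subgroup.mem_comap.2 (helem ▸ elementary_mem _ _ hplane t)

end Stabilization

section ComponentCharacter

variable (n) in
/-- An integral isometry of the hyperbolic lattice, viewed in the real group `O(n, n)`. -/
noncomputable def toIndefiniteOrthogonal : Ogg n →* indefiniteOrthogonal (Fin n) (Fin n) where
  toFun A := ⟨conjPD (Fin n) (A.val.val.map (Int.castRingHom ℝ)),
    conjPD_mem_indefiniteOrthogonal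
      (map_transpose_mul_JD_mul_map (Int.castRingHom ℝ) (transpose_mul_Qmat_mul A))⟩
  map_one' := Subtype.ext (by simp)
  map_mul' A B := Subtype.ext <| by
    simp only [Subgroup.coe_mul, Units.val_mul, Matrix.map_mul, map_mul, Submonoid.mk_mul_mk]

lemma toBlocks₁₁_toIndefiniteOrthogonal (A : Ogg n) (i j : Fin n) :
    (toIndefiniteOrthogonal n A).val.toBlocks₁₁ i j = (1 / 2 : ℝ) *
      (A.val.val (Sum.inl i) (Sum.inl j) + A.val.val (Sum.inl i) (Sum.inr j) +
        A.val.val (Sum.inr i) (Sum.inl j) + A.val.val (Sum.inr i) (Sum.inr j)) :=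
  congrFun₂ (toBlocks₁₁_conjPD (A.val.val.map (Int.castRingHom ℝ))) i j

lemma positiveSign_stabilization (A : Ogg n) :
    positiveSign _ _ (toIndefiniteOrthogonal (n + 1) (stabilization n A)) =
      positiveSign _ _ (toIndefiniteOrthogonal n A) := by
  have hblocks : (toIndefiniteOrthogonal (n + 1) (stabilization n A)).val.toBlocks₁₁.submatrix
      finSumFinEquiv finSumFinEquiv =
        fromBlocks (toIndefiniteOrthogonal n A).val.toBlocks₁₁ 0 0
          (1 : Matrix (Fin 1) (Fin 1) ℝ) := by
    ext (i | i) (j | j) <;>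
      simp [toBlocks₁₁_toIndefiniteOrthogonal, extendMat, Fin.ext_iff, one_apply] <;> grind
  change SignType.sign _ = SignType.sign _
  rw [← det_submatrix_equiv_self finSumFinEquiv, hblocks, det_fromBlocks_zero₂₁, det_one, mul_one]

variable (n) in
/-- The determinant together with the orientation character of the positive definite part; they
separate the four connected components of the real group `O(n, n)`. -/
noncomputable def componentCharacter : Ogg n →* ℤˣ × SignTypeˣ :=
  (Matrix.GeneralLinearGroup.det.comp (Ogg n).subtype).prod
    ((positiveSign (Fin n) (Fin n)).comp (toIndefiniteOrthogonal n)).toHomUnits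

lemma componentCharacter_eq_iff {m : ℕ} (A : Ogg n) (B : Ogg m) :
    componentCharacter n A = componentCharacter m B ↔ A.val.val.det = B.val.val.det ∧
      positiveSign _ _ (toIndefiniteOrthogonal n A) =
        positiveSign _ _ (toIndefiniteOrthogonal m B) := by
  rw [Prod.ext_iff, Units.ext_iff, Units.ext_iff]
  rfl

lemma componentCharacter_stabilization (A : Ogg n) :
    componentCharacter (n + 1) (stabilization n A) = componentCharacter n A := by
  refine (componentCharacter_eq_iff _ _).2 ⟨?_, positiveSign_stabilization A⟩
  rw [val_stabilization, ← det_submatrix_equiv_self (hypIdxSuccEquiv n), extendMat_submatrix,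
    det_fromBlocks_zero₂₁, det_one, mul_one]

/-- Elementary transformations become commutators after one stabilization. -/
lemma elementarySubgroup_le_ker_componentCharacter (hn : 2 ≤ n) :
    elementarySubgroup n ≤ (componentCharacter n).ker := by
  intro E hE
  rw [MonoidHom.mem_ker, ← componentCharacter_stabilization]
  exact Abelianization.commutator_subset_ker _
    (elementarySubgroup_le_commutator (by omega) (stabilization_mem_elementarySubgroup hE))

lemma det_hypIdx_one (M : Matrix (HypIdx 1) (HypIdx 1) ℤ) :
    M.det = M (Sum.inl 0) (Sum.inl 0) * M (Sum.inr 0) (Sum.inr 0) -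
      M (Sum.inl 0) (Sum.inr 0) * M (Sum.inr 0) (Sum.inl 0) := by
  rw [← det_submatrix_equiv_self (finSumFinEquiv (m := 1) (n := 1)).symm]
  exact det_fin_two _

lemma hyperbolic_plane_entries {a b c d : ℤ} (hac : a * c = 0) (hbd : b * d = 0)
    (hform : a * d + b * c = 1) (hdet : a * d - b * c = 1) (hpos : 0 < a + b + c + d) :
    a = 1 ∧ b = 0 ∧ c = 0 ∧ d = 1 := by
  have had : a * d = 1 := by linarith
  rcases Int.eq_one_or_neg_one_of_mul_eq_one' had with ⟨rfl, rfl⟩ | ⟨rfl, rfl⟩ <;> omega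

lemma eq_one_of_componentCharacter_eq_one {A : Ogg 1} (hA : componentCharacter 1 A = 1) :
    A = 1 := by
  rw [← map_one (componentCharacter 1), componentCharacter_eq_iff, map_one, map_one] at hA
  obtain ⟨hdet, hsign⟩ := hA
  have hpos := sign_eq_one_iff.1 hsign
  rw [det_fin_one, toBlocks₁₁_toIndefiniteOrthogonal] at hpos
  have hsum_pos := pos_of_mul_pos_right hpos (by norm_num : (0 : ℝ) ≤ 1 / 2)
  have hform (i j : HypIdx 1) := congrFun₂ (transpose_mul_Qmat_mul A) i j
  set a := A.val.val (Sum.inl 0) (Sum.inl 0)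
  set b := A.val.val (Sum.inl 0) (Sum.inr 0)
  set c := A.val.val (Sum.inr 0) (Sum.inl 0)
  set d := A.val.val (Sum.inr 0) (Sum.inr 0)
  have hac : c * a + a * c = 0 := by simpa [mul_apply, Qmat] using hform (Sum.inl 0) (Sum.inl 0)
  have hbd : d * b + b * d = 0 := by simpa [mul_apply, Qmat] using hform (Sum.inr 0) (Sum.inr 0)
  have hcross : c * b + a * d = 1 := by simpa [mul_apply, Qmat] using hform (Sum.inl 0) (Sum.inr 0)
  obtain ⟨ha, hb, hc, hd⟩ := hyperbolic_plane_entries (by linarith) (by linarith) (by linarith)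
    ((det_hypIdx_one A.val.val).symm.trans (hdet.trans det_one)) (by exact_mod_cast hsum_pos)
  ext i j
  rcases i with i | i <;> rcases j with j | j <;>
    simp [Subsingleton.elim i 0, Subsingleton.elim j 0, ha, hb, hc, hd]

lemma ker_componentCharacter_le_elementarySubgroup (hn : 1 ≤ n) :
    (componentCharacter n).ker ≤ elementarySubgroup n := by
  induction n, hn using Nat.le_induction with
  | base =>
    intro A hA
    exact eq_one_of_componentCharacter_eq_one hA ▸ one_mem _
  | succ n hn ih =>
    intro A hA
    obtain ⟨E, hE, B, rfl⟩ := exists_eq_mul_stabilization hn A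
    have hEχ := elementarySubgroup_le_ker_componentCharacter (by omega) hE
    rw [mul_mem_cancel_left hEχ, MonoidHom.mem_ker, componentCharacter_stabilization] at hA
    exact mul_mem hE (stabilization_mem_elementarySubgroup (ih hA))

end ComponentCharacter

end Ogg

theorem Ogg_stabilization_abelianization_general (g : ℕ) (hg : 3 ≤ g) :
    ∃ φ : ↥(Ogg g) →* ↥(Ogg (g + 1)),
      (∀ A : ↥(Ogg g), (φ A).val.val = extendMat A.val.val) ∧
      Function.Bijective (Abelianization.map φ) := by
  refine ⟨Ogg.stabilization g, Ogg.val_stabilization, abelianizationMap_bijective ?_ ?_⟩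
  · intro A hA
    have hχ := Abelianization.commutator_subset_ker (Ogg.componentCharacter (g + 1)) hA
    rw [MonoidHom.mem_ker, Ogg.componentCharacter_stabilization] at hχ
    exact Ogg.elementarySubgroup_le_commutator hg
      (Ogg.ker_componentCharacter_le_elementarySubgroup (by omega) hχ)
  · refine eq_top_iff.2 fun A _ ↦ ?_
    obtain ⟨E, hE, B, rfl⟩ := Ogg.exists_eq_mul_stabilization (by omega) A
    exact Subgroup.mul_mem_sup (Ogg.elementarySubgroup_le_commutator (by omega) hE) ⟨B, rfl⟩

/-- For every `g ≥ 5`, the block-inclusion homomorphism `O_{g,g}(ℤ) → O_{g+1,g+1}(ℤ)`,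
extending a matrix by the identity on one additional hyperbolic plane, induces an
isomorphism on abelianisations. -/
theorem Ogg_stabilization_abelianization (g : ℕ) (hg : 5 ≤ g) :
    ∃ φ : ↥(Ogg g) →* ↥(Ogg (g + 1)),
      (∀ A : ↥(Ogg g), (φ A).val.val = extendMat A.val.val) ∧
      Function.Bijective (Abelianization.map φ) :=
  Ogg_stabilization_abelianization_general g (by omega)
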